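/- Let w be in B_n, 1 ≤ i < j ≤ n, a := w(i), b := w(j), and suppose l(w(i,j)) > l(w). Then l(w(i,j)) - l(w) - 1 = 2 N_{ab}(w[i,j]). -/

import Mathlib

/-!
Write `ℓ = ℓ₊ + ℓ₋` and let `σ` be the transposition of the positions `i` and `j`.

* `ℓ₋` does not change: negation reverses `≺`, so the relation `w(k) ≻ -w(l)` is symmetric in
  `k, l`, and counting it over `k ≤ l` depends only on the set of letters of `w`
  (`minusSum_swap`).
* For `ℓ₊`, reindexing by `σ` writes the change as the sum over all `(k, l)` of
  `([σ k < σ l] - [k < l]) [w(k) ≻ w(l)]`. Only pairs with one member in `{i, j}` and the other in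
  `[i, j]` survive, which gives `[b ≻ a] - [a ≻ b]` plus, for every letter `c` strictly between the
  two positions, `[c ≻ a] - [a ≻ c] + [b ≻ c] - [c ≻ b]` (`plusSum_swap`).

If `a ≺ b`, the term of `c` is `2` when `a ≺ c ≺ b` and `0` otherwise, so the change is
`1 + 2 N_{ab}(w[i,j])`. If `b ≺ a`, all terms are nonpositive and the length drops, against the
hypothesis.
-/

open scoped BigOperators

namespace HL

/-! ### The order `≺` on nonzero integers in `[-n,n]`:
`1 ≺ 2 ≺ ... ≺ n ≺ -n ≺ -(n-1) ≺ ... ≺ -1`. -/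

def slt (a b : ℤ) : Prop :=
  (0 < a ∧ b < 0) ∨ (0 < a ∧ 0 < b ∧ a < b) ∨ (a < 0 ∧ b < 0 ∧ a < b)

instance slt.dec (a b : ℤ) : Decidable (slt a b) := by unfold slt; infer_instance

def sle (a b : ℤ) : Prop := slt a b ∨ a = b

instance sle.dec (a b : ℤ) : Decidable (sle a b) := by unfold sle; infer_instance

/-! ### Signed permutations (windows), reflections acting on the right -/

/-- The right action of a reflection on a window (or column), with 1-based
positions.  The reflection `(i, j)` with `j > 0` transposes positions `i` and
`j`; the reflection `(i, -j)` (i.e. `(i,\bar\jmath)`) with `i ≠ j` transposes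
positions `i, j` and negates both entries; `(i, -i)` negates position `i`. -/
def applyRefl (l : List ℤ) (t : ℕ × ℤ) : List ℤ :=
  if 0 < t.2 then
    (l.set (t.1 - 1) (l.getD (t.2.toNat - 1) 0)).set (t.2.toNat - 1) (l.getD (t.1 - 1) 0)
  else
    if t.1 = (-t.2).toNat then l.set (t.1 - 1) (-(l.getD (t.1 - 1) 0))
    else (l.set (t.1 - 1) (-(l.getD ((-t.2).toNat - 1) 0))).set ((-t.2).toNat - 1)
          (-(l.getD (t.1 - 1) 0))

def applyAll (w : List ℤ) (T : List (ℕ × ℤ)) : List ℤ := T.foldl applyRefl w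

/-- The word `w[i,j] = w(i) w(i+1) ... w(j)`, 1-based and inclusive. -/
def word (l : List ℤ) (i j : ℕ) : List ℤ := (l.drop (i - 1)).take (j + 1 - i)

/-- `N_{ab}(u)` = number of letters `c` of the word `u` with `a ≺ c ≺ b`. -/
def Nab (a b : ℤ) (u : List ℤ) : ℕ :=
  (u.filter (fun c => decide (slt a c ∧ slt c b))).length

/-- `ℓ₊(w) = #{(k,l) : k < l, w(k) ≻ w(l)}`. -/
def lplus (l : List ℤ) : ℕ :=
  (((Finset.range l.length) ×ˢ (Finset.range l.length)).filter
    (fun p => p.1 < p.2 ∧ slt (l.getD p.2 0) (l.getD p.1 0))).card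

/-- `ℓ₋(w) = #{(k,l) : k ≤ l, w(k) ≻ -w(l)}`. -/
def lminus (l : List ℤ) : ℕ :=
  (((Finset.range l.length) ×ˢ (Finset.range l.length)).filter
    (fun p => p.1 ≤ p.2 ∧ slt (-(l.getD p.2 0)) (l.getD p.1 0))).card

/-- The Coxeter length of a signed permutation given by its window. -/
def len (l : List ℤ) : ℕ := lplus l + lminus l

/-- The (finite) set of windows of all signed permutations in `B_n`. -/
def allWindows (n : ℕ) : Finset (List ℤ) :=
  Finset.image (fun w : Equiv.Perm (Fin n) × (Fin n → Bool) =>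
    (List.finRange n).map (fun i =>
      if w.2 i then -(((w.1 i : ℕ) : ℤ) + 1) else ((w.1 i : ℕ) : ℤ) + 1)) Finset.univ

/-- `w`-admissibility of a sequence of reflections: a strictly decreasing
chain in Bruhat order (recorded via the length function). -/
def decChain : List ℤ → List (ℕ × ℤ) → Bool
  | _, [] => true
  | w, t :: ts => (decide (len (applyRefl w t) < len w)) && decChain (applyRefl w t) ts

/-- Increasing-admissibility: a strictly increasing chain. -/
def incChain : List ℤ → List (ℕ × ℤ) → Bool
  | _, [] => true
  | w, t :: ts => (decide (len w < len (applyRefl w t))) && incChain (applyRefl w t) ts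

/-- The subsequence of a chain `Γ` selected by a set `J` of (0-based) positions. -/
def selChain (Γ : List (ℕ × ℤ)) (J : Finset ℕ) : List (ℕ × ℤ) :=
  (J.sort (· ≤ ·)).map (fun j => Γ.getD j (0, 0))

/-! ### The `λ`-chain of type `C_n` -/

/-- `Γ'_j = ((1,-j),(2,-j),...,(j-1,-j))`. -/
def gammaPrime (j : ℕ) : List (ℕ × ℤ) := (List.range (j - 1)).map (fun r => (r + 1, -(j : ℤ)))

/-- `Γ_j(k) = ((1,-j),...,(j-1,-j),(j,-(k+1)),...,(j,-n),(j,-j),(j,n),...,(j,k+1))`. -/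
def gammaJK (n j k : ℕ) : List (ℕ × ℤ) :=
  gammaPrime j
    ++ (List.range (n - k)).map (fun r => (j, -((k + 1 + r : ℕ) : ℤ)))
    ++ [(j, -(j : ℤ))]
    ++ (List.range (n - k)).map (fun r => (j, ((n - r : ℕ) : ℤ)))

/-- `Γ(k) = Γ'_2 ⋯ Γ'_k Γ_1(k) ⋯ Γ_k(k)` (type `C_n`). -/
def gammaChain (n k : ℕ) : List (ℕ × ℤ) :=
  ((List.range (k - 1)).map (fun r => gammaPrime (r + 2))).flatten
    ++ ((List.range k).map (fun r => gammaJK n (r + 1) k)).flatten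

/-- `λ'_i = #{j : λ_j ≥ i}`, the conjugate partition. -/
def conj (n : ℕ) (lam : Fin n → ℕ) (i : ℕ) : ℕ :=
  (Finset.univ.filter (fun j : Fin n => i ≤ lam j)).card

/-- `λ_1`, the largest part. -/
def lamOne (n : ℕ) (lam : Fin n → ℕ) : ℕ := Finset.univ.sup lam

/-- The fixed `λ`-chain `Γ = Γ^{λ_1} Γ^{λ_1-1} ⋯ Γ^1` with `Γ^i = Γ(λ'_i)`. -/
def lambdaChain (n : ℕ) (lam : Fin n → ℕ) : List (ℕ × ℤ) :=
  ((List.range (lamOne n lam)).map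
    (fun r => gammaChain n (conj n lam (lamOne n lam - r)))).flatten

/-- The set `A(λ)` of admissible pairs `(w, J)`. -/
def ASet (n : ℕ) (lam : Fin n → ℕ) : Set (List ℤ × Finset ℕ) :=
  {p | p.1 ∈ allWindows n ∧ p.2 ⊆ Finset.range (lambdaChain n lam).length ∧
    decChain p.1 (selChain (lambdaChain n lam) p.2) = true}

/-! ### Roots, coroots, affine reflections, and the weight `μ(T)` -/

/-- The root of type `C_n` corresponding to a symbol: `(i,j) ↦ ε_i - ε_j`,
`(i,-j) ↦ ε_i + ε_j` for `i < j`, and `(i,-i) ↦ 2ε_i`. -/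
def rootVec (n : ℕ) (β : ℕ × ℤ) : Fin n → ℤ := fun r =>
  (if ((r : ℕ) + 1 : ℤ) = (β.1 : ℤ) then 1 else 0) +
  (if 0 < β.2 then (if ((r : ℕ) + 1 : ℤ) = β.2 then -1 else 0)
   else (if ((r : ℕ) + 1 : ℤ) = -β.2 then 1 else 0))

/-- The coroot (type `C_n`): `(2ε_i)^∨ = ε_i`, the long rootss are unchanged. -/
def corootVec (n : ℕ) (β : ℕ × ℤ) : Fin n → ℤ :=
  if β.2 = -(β.1 : ℤ) then (fun r => if ((r : ℕ) + 1 : ℤ) = (β.1 : ℤ) then 1 else 0)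
  else rootVec n β

/-- Standard inner product on `ℤ^n`. -/
def ip (n : ℕ) (u v : Fin n → ℤ) : ℤ := ∑ r, u r * v r

/-- The affine reflection in the hyperplane `{v : ⟨v, β^∨⟩ = c}`. -/
def affRefl (n : ℕ) (β : ℕ × ℤ) (c : ℤ) (v : Fin n → ℤ) : Fin n → ℤ :=
  fun r => v r - (ip n v (corootVec n β) - c) * rootVec n β r

/-- `l_k = #{j ≤ k : β_j = β_k}` (here `k` is 0-based). -/
def lCount (Γ : List (ℕ × ℤ)) (k : ℕ) : ℕ := (Γ.take (k + 1)).count (Γ.getD k (0, 0))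

/-- `μ(J) = \hat r_{j_1} ⋯ \hat r_{j_s}(λ)` for `J = {j_1 < ... < j_s}`. -/
def muJ (n : ℕ) (Γ : List (ℕ × ℤ)) (lamVec : Fin n → ℤ) (J : Finset ℕ) : Fin n → ℤ :=
  (J.sort (· ≤ ·)).foldr (fun j v => affRefl n (Γ.getD j (0, 0)) ((lCount Γ j : ℕ) : ℤ) v) lamVec

/-- The linear action of a signed permutation (given by its window) on `ℤ^n`:
`w(ε_i) = ε_{w(i)}` with `ε_{-i} = -ε_i`. -/
def wAct (n : ℕ) (w : List ℤ) (v : Fin n → ℤ) : Fin n → ℤ := fun r =>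
  ∑ i : Fin n, ((if w.getD i 0 = ((r : ℕ) + 1 : ℤ) then v i else 0) +
    (if w.getD i 0 = -(((r : ℕ) + 1 : ℤ)) then -(v i) else 0))

def lamVec (n : ℕ) (lam : Fin n → ℕ) : Fin n → ℤ := fun i => (lam i : ℤ)

/-! ### Fillings of the doubled shape `\hat λ` -/

/-- A filling of the doubled shape, recorded by its primed columns `C'_{i,k}`
(`Cp i k`) and unprimed columns `C_{i,j}` (`Cu i j`). -/
structure Filling where
  Cp : ℕ → ℕ → List ℤ
  Cu : ℕ → ℕ → List ℤ

def validP (n : ℕ) (lam : Fin n → ℕ) (i k : ℕ) : Prop :=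
  1 ≤ i ∧ i ≤ lamOne n lam ∧ 2 ≤ k ∧ k ≤ conj n lam i

def validU (n : ℕ) (lam : Fin n → ℕ) (i j : ℕ) : Prop :=
  1 ≤ i ∧ i ≤ lamOne n lam ∧ 1 ≤ j ∧ j ≤ conj n lam i ∧ (i = 1 → j = 1)

instance validP.dec (n : ℕ) (lam : Fin n → ℕ) (i k : ℕ) : Decidable (validP n lam i k) := by
  unfold validP; infer_instance

instance validU.dec (n : ℕ) (lam : Fin n → ℕ) (i j : ℕ) : Decidable (validU n lam i j) := by
  unfold validU; infer_instance

/-- The right neighbour `C'_{i,k+1}` of `C'_{i,k}`, with the convention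
`C'_{i,λ'_i+1} = C_{i,1}`. -/
def CpNxt (n : ℕ) (lam : Fin n → ℕ) (F : Filling) (i k : ℕ) : List ℤ :=
  if k < conj n lam i then F.Cp i (k + 1) else F.Cu i 1

/-- The right neighbour `C_{i,j+1}` of `C_{i,j}`, with the conventions
`C_{i,λ'_i+1} = C'_{i-1,2}` (if `λ'_{i-1} > 1`) and `C_{i,λ'_i+1} = C_{i-1,1}`
(if `λ'_{i-1} = 1`). -/
def CuNxt (n : ℕ) (lam : Fin n → ℕ) (F : Filling) (i j : ℕ) : List ℤ :=
  if j < conj n lam i then F.Cu i (j + 1)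
  else if 2 ≤ conj n lam (i - 1) then F.Cp (i - 1) 2 else F.Cu (i - 1) 1

/-- No two entries `a, b` of a column with `a = ±b`. -/
def colDistinct (c : List ℤ) : Prop :=
  ∀ p q : ℕ, p < q → q < c.length →
    c.getD p 0 ≠ c.getD q 0 ∧ c.getD p 0 ≠ -(c.getD q 0)

/-- `R = (r_1 < r_2 < ... < r_p)` with `1 ≤ r_t < j ≤ d`. -/
def sortedR (R : List ℕ) (j d : ℕ) : Prop :=
  List.Chain' (· < ·) R ∧ (∀ r ∈ R, 1 ≤ r ∧ r < j) ∧ 1 ≤ j ∧ j ≤ d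

/-- `D (r_1,-j) (r_2,-j) ⋯ (r_p,-j)`. -/
def cycleApply (D : List ℤ) (R : List ℕ) (j : ℕ) : List ℤ :=
  R.foldl (fun E r => applyRefl E (r, -(j : ℤ))) D

/-- The relation between `C_{i,j+1}[1,λ'_i] = E` and `C_{i,j} = D` in a filling:
`E` differs from `D' = D(r_1,-j)⋯(r_p,-j)` only in position `j`,
`E(j) ∉ {±D'(r) : r ≠ j}` and `E(j) ⪯ D'(j)`. -/
def unprimedTrans (D E : List ℤ) (R : List ℕ) (j d : ℕ) : Prop :=
  (∀ r, 1 ≤ r → r ≤ d → r ≠ j →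
    E.getD (r - 1) 0 = (cycleApply D R j).getD (r - 1) 0) ∧
  (∀ r, 1 ≤ r → r ≤ d → r ≠ j →
    E.getD (j - 1) 0 ≠ (cycleApply D R j).getD (r - 1) 0 ∧
    E.getD (j - 1) 0 ≠ -((cycleApply D R j).getD (r - 1) 0)) ∧
  sle (E.getD (j - 1) 0) ((cycleApply D R j).getD (j - 1) 0)

/-- The set `F(λ)` of fillings of the doubled shape `\hat λ`. -/
def FSet (n : ℕ) (lam : Fin n → ℕ) : Set Filling :=
  {F |
    -- shape
    (∀ i k, (validP n lam i k → (F.Cp i k).length = conj n lam i) ∧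
      (¬ validP n lam i k → F.Cp i k = [])) ∧
    (∀ i j, (validU n lam i j → (F.Cu i j).length = conj n lam i) ∧
      (¬ validU n lam i j → F.Cu i j = [])) ∧
    -- entries lie in `{±1, ..., ±n}`
    (∀ i k, validP n lam i k → ∀ a ∈ F.Cp i k, 1 ≤ a.natAbs ∧ a.natAbs ≤ n) ∧
    (∀ i j, validU n lam i j → ∀ a ∈ F.Cu i j, 1 ≤ a.natAbs ∧ a.natAbs ≤ n) ∧
    -- (1) rows weakly decrease from left to right
    (∀ i k, validP n lam i k → ∀ r, 1 ≤ r → r ≤ conj n lam i →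
      sle ((CpNxt n lam F i k).getD (r - 1) 0) ((F.Cp i k).getD (r - 1) 0)) ∧
    (∀ i j, 2 ≤ i → validU n lam i j → ∀ r, 1 ≤ r → r ≤ conj n lam i →
      sle ((CuNxt n lam F i j).getD (r - 1) 0) ((F.Cu i j).getD (r - 1) 0)) ∧
    -- (2) no column contains `a, b` with `a = ±b`
    (∀ i k, validP n lam i k → colDistinct (F.Cp i k)) ∧
    (∀ i j, validU n lam i j → colDistinct (F.Cu i j)) ∧
    -- (3) primed transitions: `C'_{i,k+1} = C'_{i,k}(r_1,-k)⋯(r_p,-k)`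
    (∀ i k, validP n lam i k → ∃ R : List ℕ, sortedR R k (conj n lam i) ∧
      CpNxt n lam F i k = cycleApply (F.Cp i k) R k) ∧
    -- (3) unprimed transitions
    (∀ i j, 2 ≤ i → validU n lam i j → ∃ R : List ℕ, sortedR R j (conj n lam i) ∧
      unprimedTrans (F.Cu i j) ((CuNxt n lam F i j).take (conj n lam i)) R j (conj n lam i))}

/-! ### The filling map `f` -/

/-- Offset in `Γ` of the beginning of block `Γ^i` (the blocks are listed for
`i = λ_1` down to `1`). -/
def offsetBlock (n : ℕ) (lam : Fin n → ℕ) (i : ℕ) : ℕ :=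
  ∑ r ∈ Finset.Ico (i + 1) (lamOne n lam + 1), (gammaChain n (conj n lam r)).length

/-- Offset in `Γ` of the beginning of the factor `Γ'_{i,k}`.-/
def offsetP (n : ℕ) (lam : Fin n → ℕ) (i k : ℕ) : ℕ :=
  offsetBlock n lam i + ∑ j ∈ Finset.Ico 2 k, (gammaPrime j).length

/-- Offset in `Γ` of the beginning of the factor `Γ_{i,j}`.-/
def offsetU (n : ℕ) (lam : Fin n → ℕ) (i j : ℕ) : ℕ :=
  offsetBlock n lam i + (∑ k ∈ Finset.Ico 2 (conj n lam i + 1), (gammaPrime k).length)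
    + ∑ j' ∈ Finset.Ico 1 j, (gammaJK n j' (conj n lam i)).length

/-- `π = w ⋅ (all selected reflections at positions < off)`. -/
def piW (n : ℕ) (lam : Fin n → ℕ) (w : List ℤ) (J : Finset ℕ) (off : ℕ) : List ℤ :=
  applyAll w (selChain (lambdaChain n lam) (J.filter (fun x => x < off)))

/-- The filling map `f`, sending an (admissible) pair `(w, J)` to a filling of
the doubled shape `\hat λ`. -/
def fMap (n : ℕ) (lam : Fin n → ℕ) (w : List ℤ) (J : Finset ℕ) : Filling where
  Cp := fun i k => if validP n lam i k
    then (piW n lam w J (offsetP n lam i k)).take (conj n lam i) else []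
  Cu := fun i j => if validU n lam i j
    then (piW n lam w J (offsetU n lam i j)).take (conj n lam i) else []

/-! ### Content of a filling -/

/-- The columns `\bar{C}^i = C'_{i,2} C_{i,1}` (left to right, `i = λ_1, ..., 1`)
of the compressed filling `\barσ` of shape `2λ`; by the conventions,
`C'_{i,2} = C_{i,1}` when `λ'_i = 1`. -/
def compCols (n : ℕ) (lam : Fin n → ℕ) (F : Filling) : List (List ℤ) :=
  ((List.range (lamOne n lam)).map (fun t =>
    [(if 2 ≤ conj n lam (lamOne n lam - t) then F.Cp (lamOne n lam - t) 2
      else F.Cu (lamOne n lam - t) 1), F.Cu (lamOne n lam - t) 1])).flatten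

/-- The content of a list of columns: the `i`-th coordinate is half the
difference between the numbers of occurrences of `i` and of `-i`. -/
def ctCols (n : ℕ) (cols : List (List ℤ)) : Fin n → ℚ := fun r =>
  ((cols.flatten.count (((r : ℕ) + 1 : ℕ) : ℤ) : ℚ) -
    (cols.flatten.count (-(((r : ℕ) + 1 : ℕ) : ℤ)) : ℚ)) / 2

/-- The content `ct(σ)` of a filling `σ` of `\hatλ`. -/
def ctQ (n : ℕ) (lam : Fin n → ℕ) (F : Filling) : Fin n → ℚ :=
  ctCols n (compCols n lam F)

/-! ### The statistics `N(D,C)` and `des(D,C)` -/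

/-- `σ_{ab} = 1` if `a` and `b` are both negative, else `0`. -/
def sigmaAB (a b : ℤ) : ℕ := if a < 0 ∧ b < 0 then 1 else 0

def allEntries (n : ℕ) : List ℤ :=
  (List.range n).map (fun r => ((r + 1 : ℕ) : ℤ)) ++
    (List.range n).map (fun r => -((r + 1 : ℕ) : ℤ))

/-- Case 1: `N(D, D(r,-j)) = N_{\bar b, a}(D[r+1,j-1]) +
#{c : \bar b ≺ c ≺ a, c ∉ ±D[1,j]} + σ_{ab}` where `a = D(r)`, `b = D(j)`. -/
def N1 (n : ℕ) (D : List ℤ) (r j : ℕ) : ℕ :=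
  Nab (-(D.getD (j - 1) 0)) (D.getD (r - 1) 0) (word D (r + 1) (j - 1)) +
  ((allEntries n).filter (fun c => decide (slt (-(D.getD (j - 1) 0)) c ∧
    slt c (D.getD (r - 1) 0) ∧ c ∉ D.take j ∧ c ∉ (D.take j).map (fun x => -x)))).length +
  sigmaAB (D.getD (r - 1) 0) (D.getD (j - 1) 0)

/-- Case 2: `N(D, D(r_1,-j)⋯(r_p,-j)) = ∑ N(D_{t-1}, D_t)`. -/
def cycleN (n : ℕ) : List ℤ → List ℕ → ℕ → ℕ
  | _, [], _ => 0
  | D, r :: rs, j => N1 n D r j + cycleN n (applyRefl D (r, -(j : ℤ))) rs j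

/-- The possible values `(N(D,C), des(D,C))` arising from the case-by-case
definition of the statistics (cases 0, 2, 3; case 1 is case 2 with `p = 1`).
If `C` is one box taller than `D`, `C` is replaced by `C[1,d]`. -/
def NdesCand (n : ℕ) (D C : List ℤ) : Set (ℕ × ℕ) :=
  {x |
    (C.take D.length = D ∧ x = (0, 0)) ∨
    (∃ j R, sortedR R j D.length ∧ R ≠ [] ∧ C.take D.length = cycleApply D R j ∧
      x = (cycleN n D R j, R.length)) ∨
    (∃ j R, sortedR R j D.length ∧
      (∀ r, 1 ≤ r → r ≤ D.length → r ≠ j →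
        (C.take D.length).getD (r - 1) 0 = (cycleApply D R j).getD (r - 1) 0) ∧
      (∀ r, 1 ≤ r → r ≤ D.length → r ≠ j →
        (C.take D.length).getD (j - 1) 0 ≠ (cycleApply D R j).getD (r - 1) 0 ∧
        (C.take D.length).getD (j - 1) 0 ≠ -((cycleApply D R j).getD (r - 1) 0)) ∧
      slt ((C.take D.length).getD (j - 1) 0) ((cycleApply D R j).getD (j - 1) 0) ∧
      x = (cycleN n D R j +
        Nab ((C.take D.length).getD (j - 1) 0) ((cycleApply D R j).getD (j - 1) 0)
          (word D (j + 1) D.length), R.length + 1))}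

noncomputable def Nstat (n : ℕ) (D C : List ℤ) : ℕ :=
  sInf {v | ∃ d, (v, d) ∈ NdesCand n D C}

noncomputable def desStat (n : ℕ) (D C : List ℤ) : ℕ :=
  sInf {d | ∃ v, (v, d) ∈ NdesCand n D C}

/-- All columns of a filling of `\hatλ`, listed from left to right. -/
def colList (n : ℕ) (lam : Fin n → ℕ) (F : Filling) : List (List ℤ) :=
  ((List.range (lamOne n lam)).map (fun t =>
    ((List.range (conj n lam (lamOne n lam - t) - 1)).map
      (fun s => F.Cp (lamOne n lam - t) (s + 2))) ++
    (if lamOne n lam - t = 1 then [F.Cu 1 1]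
     else (List.range (conj n lam (lamOne n lam - t))).map
      (fun s => F.Cu (lamOne n lam - t) (s + 1))))).flatten

/-- Sum of a binary statistic over adjacent pairs of a list. -/
def adjSumN (f : List ℤ → List ℤ → ℕ) : List (List ℤ) → ℕ
  | a :: b :: rest => f a b + adjSumN f (b :: rest)
  | _ => 0

/-- `N(σ) = ∑_{i=1}^{m-1} N(C_{i+1}, C_i) + ℓ₊(C_1)`. -/
noncomputable def Nsigma (n : ℕ) (lam : Fin n → ℕ) (F : Filling) : ℕ :=
  adjSumN (Nstat n) (colList n lam F) + lplus ((colList n lam F).getLastD [])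

/-- `des(σ) = ∑_{i=1}^{m-1} des(C_{i+1}, C_i)`. -/
noncomputable def desSigma (n : ℕ) (lam : Fin n → ℕ) (F : Filling) : ℕ :=
  adjSumN (desStat n) (colList n lam F)

/-! ### Statistics on fillings of the plain shape `λ` (for Proposition 2.2) -/

/-- The descent statistic of a filling of the Young diagram of `λ`, whose
columns are listed from left to right. -/
def desTau (cols : List (List ℤ)) : ℕ :=
  adjSumN (fun L R => ((Finset.range L.length).filter
    (fun r => slt (R.getD r 0) (L.getD r 0))).card) cols

/-- The complementary inversion statistic `cinv = n(λ) - inv` of a filling of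
the Young diagram of `λ` (columns listed from left to right, `C_k` being the
`k`-th column from the right). -/
def cinvTau (cols : List (List ℤ)) : ℕ :=
  ∑ q ∈ Finset.range cols.length,
    (((Finset.range (cols.getD q []).length) ×ˢ (Finset.range (cols.getD q []).length)).filter
      (fun pp => pp.1 < pp.2 ∧
        (((1 ≤ q ∧ pp.2 < (cols.getD (q - 1) []).length) ∧
            slt ((cols.getD q []).getD pp.2 0) ((cols.getD q []).getD pp.1 0) ∧
            slt ((cols.getD q []).getD pp.1 0) ((cols.getD (q - 1) []).getD pp.2 0)) ∨
          (¬ (1 ≤ q ∧ pp.2 < (cols.getD (q - 1) []).length) ∧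
            slt ((cols.getD q []).getD pp.2 0) ((cols.getD q []).getD pp.1 0))))).card

/-! ### Chains for the root systems `C_n` and `B_n` and the conditions (R1), (R2) -/

def isPosRootC (n : ℕ) (β : ℕ × ℤ) : Prop :=
  (1 ≤ β.1 ∧ (β.1 : ℤ) < β.2 ∧ β.2 ≤ (n : ℤ)) ∨
  (1 ≤ β.1 ∧ 0 < -β.2 ∧ (β.1 : ℤ) ≤ -β.2 ∧ -β.2 ≤ (n : ℤ))

/-- Positive roots of `B_n` use the same symbols; `(i,-i)` encodes `ε_i`. -/
def isPosRootB (n : ℕ) (β : ℕ × ℤ) : Prop := isPosRootC n β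

/-- The root of type `B_n` of a symbol: as in type `C` except `(i,-i) ↦ ε_i`. -/
def rootVecB (n : ℕ) (β : ℕ × ℤ) : Fin n → ℤ :=
  if β.2 = -(β.1 : ℤ) then (fun r => if ((r : ℕ) + 1 : ℤ) = (β.1 : ℤ) then 1 else 0)
  else rootVec n β

/-- The coroot of type `B_n`: `ε_i^∨ = 2ε_i`, long roots unchanged. -/
def corootVecB (n : ℕ) (β : ℕ × ℤ) : Fin n → ℤ :=
  if β.2 = -(β.1 : ℤ) then (fun r => if ((r : ℕ) + 1 : ℤ) = (β.1 : ℤ) then 2 else 0)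
  else rootVec n β

/-- `ω_k` in type `C_n`. -/
def omegaC (n k : ℕ) : Fin n → ℤ := fun r => if (r : ℕ) + 1 ≤ k then 1 else 0

/-- `ω_k` in type `B_n` (`ω_n` is half the sum of the `ε_i`). -/
def omegaB (n k : ℕ) : Fin n → ℚ :=
  if k = n then (fun _ => 1/2) else (fun r => if (r : ℕ) + 1 ≤ k then 1 else 0)

/-- type `B`: `Γ'_j = ((1,-j),...,(j-1,-j),(j))`. -/
def gammaPrimeB (j : ℕ) : List (ℕ × ℤ) := gammaPrime j ++ [(j, -(j : ℤ))]

/-- type `B`: `Γ(k) = Γ'_1 ⋯ Γ'_k Γ_1(k) ⋯ Γ_k(k)` for `k < n`, and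
`Γ(n) = Γ'_1 ⋯ Γ'_n`. -/
def gammaChainB (n k : ℕ) : List (ℕ × ℤ) :=
  ((List.range k).map (fun r => gammaPrimeB (r + 1))).flatten
    ++ (if k = n then [] else ((List.range k).map (fun r => gammaJK n (r + 1) k)).flatten)

/-- `(R2)`: the subsequence of all occurrences of `α, β, γ` is a concatenation
of consecutive pairs `(γ, α)` or `(γ, β)`. -/
def altPairs (g a b : ℕ × ℤ) : List (ℕ × ℤ) → Prop
  | [] => True
  | [_] => False
  | x :: y :: rest => x = g ∧ (y = a ∨ y = b) ∧ altPairs g a b rest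

/-! ### Real vector space versions (for hyperplanes) -/

def ipR (n : ℕ) (u v : Fin n → ℝ) : ℝ := ∑ r, u r * v r

def affReflR (n : ℕ) (β : ℕ × ℤ) (c : ℝ) (v : Fin n → ℝ) : Fin n → ℝ :=
  fun r => v r - (ipR n v (fun s => ((corootVec n β s : ℤ) : ℝ)) - c) *
    ((rootVec n β r : ℤ) : ℝ)

def wActR (n : ℕ) (w : List ℤ) (v : Fin n → ℝ) : Fin n → ℝ := fun r =>
  ∑ i : Fin n, ((if w.getD i 0 = ((r : ℕ) + 1 : ℤ) then v i else 0) +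
    (if w.getD i 0 = -(((r : ℕ) + 1 : ℤ)) then -(v i) else 0))

/-- `γ^∨ = (2/⟨γ,γ⟩) γ`. -/
noncomputable def corootOfR (n : ℕ) (v : Fin n → ℝ) : Fin n → ℝ :=
  fun r => (2 / ipR n v v) * v r

/-- The part of the compressed filling of shape `2λ` consisting of the columns
numbered `2λ_1, 2λ_1 - 1, ..., q` (`\barσ[q]`); column `2i` is `C'_{i,2}` and
column `2i-1` is `C_{i,1}`. -/
def compColsGe (n : ℕ) (lam : Fin n → ℕ) (F : Filling) (q : ℕ) : List (List ℤ) :=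
  ((List.range (lamOne n lam)).map (fun t =>
    (if q ≤ 2 * (lamOne n lam - t) then
      [(if 2 ≤ conj n lam (lamOne n lam - t) then F.Cp (lamOne n lam - t) 2
        else F.Cu (lamOne n lam - t) 1)] else []) ++
    (if q ≤ 2 * (lamOne n lam - t) - 1 then [F.Cu (lamOne n lam - t) 1] else []))).flatten

/-! ### The chains `Δ` and `Φ` of Section 6 -/

/-- `Δ = ((1,p+1),...,(1,n),(1,-1),(1,-n),(1,-(n-1)),...,(1,-(p+1)))`. -/
def deltaChain (n p : ℕ) : List (ℕ × ℤ) :=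
  (List.range (n - p)).map (fun r => (1, ((p + 1 + r : ℕ) : ℤ)))
    ++ [(1, (-1 : ℤ))]
    ++ (List.range (n - p)).map (fun r => (1, -((n - r : ℕ) : ℤ)))

/-- The suffix `Δ_{\bar s}` of `Δ` beginning with `(1,-s)`. -/
def deltaSuffixNeg (p s : ℕ) : List (ℕ × ℤ) :=
  (List.range (s - p)).map (fun r => (1, -((s - r : ℕ) : ℤ)))

/-- The suffix `Δ_{\bar 1}` of `Δ` beginning with `(1,-1)`. -/
def deltaSuffixBar1 (n p : ℕ) : List (ℕ × ℤ) :=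
  [(1, (-1 : ℤ))] ++ (List.range (n - p)).map (fun r => (1, -((n - r : ℕ) : ℤ)))

/-- The suffix `Δ_s` of `Δ` beginning with `(1,s)` (for `p < s ≤ n`). -/
def deltaSuffixPos (n p s : ℕ) : List (ℕ × ℤ) :=
  (List.range (n + 1 - s)).map (fun r => (1, ((s + r : ℕ) : ℤ)))
    ++ [(1, (-1 : ℤ))]
    ++ (List.range (n - p)).map (fun r => (1, -((n - r : ℕ) : ℤ)))

/-- `Φ = ((1,-1),(1,-2),(2,-2),...,(1,-n),...,(n-1,-n),(n,-n))`. -/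
def phiChain (n : ℕ) : List (ℕ × ℤ) :=
  ((List.range n).map (fun jm =>
    (List.range (jm + 1)).map (fun im => (im + 1, -((jm + 1 : ℕ) : ℤ))))).flatten

/-- The suffix `Φ_{ij}` of `Φ` beginning with `(i,-j)`. -/
def phiSuffix (n i j : ℕ) : List (ℕ × ℤ) := (phiChain n).drop ((j - 1) * j / 2 + (i - 1))

/-- `ℓ^{ij}_-(w) = #{(k,l) : k ≤ l, (k,-l)` strictly precedes `(i,-j)` in `Φ`,
`w(k) ≻ -w(l)}`. -/
def lminusBefore (w : List ℤ) (i j : ℕ) : ℕ :=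
  (((Finset.range w.length) ×ˢ (Finset.range w.length)).filter
    (fun p => p.1 ≤ p.2 ∧ (p.2 + 1 < j ∨ (p.2 + 1 = j ∧ p.1 + 1 < i)) ∧
      slt (-(w.getD p.2 0)) (w.getD p.1 0))).card


/-! ### Reindexing a sum over ordered pairs of positions -/

/-- Indicator of `x ≻ y`, valued in `ℤ`. -/
def gtInd (x y : ℤ) : ℤ := if slt y x then 1 else 0

theorem slt_asymm {x y : ℤ} (h : slt x y) : ¬ slt y x := by
  unfold slt at *; omega

theorem slt_irrefl (x : ℤ) : ¬ slt x x := fun h => slt_asymm h h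

theorem slt_trans {x y z : ℤ} (h : slt x y) (h' : slt y z) : slt x z := by
  unfold slt at *; omega

theorem slt_total {x y : ℤ} (hx : x ≠ 0) (hy : y ≠ 0) (h : x ≠ y) : slt x y ∨ slt y x := by
  unfold slt; omega

/-- Negation reverses `≺`, so the relation counted by `ℓ₋` is symmetric. -/
theorem slt_neg_comm (x y : ℤ) : slt (-x) y ↔ slt (-y) x := by
  unfold slt; omega

theorem sum_swap {n p q : ℕ} (hp : p < n) (hq : q < n) (F : ℕ → ℤ) :
    ∑ k ∈ Finset.range n, F (Equiv.swap p q k) = ∑ k ∈ Finset.range n, F k := by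
  apply Equiv.Perm.sum_comp
  intro k hk
  by_contra hkn
  apply hk
  apply Equiv.swap_apply_of_ne_of_ne <;> rintro rfl <;> simp_all

theorem sum_sum_swap {n p q : ℕ} (hp : p < n) (hq : q < n) (F : ℕ → ℕ → ℤ) :
    ∑ k ∈ Finset.range n, ∑ l ∈ Finset.range n, F (Equiv.swap p q k) (Equiv.swap p q l) =
      ∑ k ∈ Finset.range n, ∑ l ∈ Finset.range n, F k l := by
  rw [sum_swap hp hq (fun k => ∑ l ∈ Finset.range n, F k (Equiv.swap p q l))]
  exact Finset.sum_congr rfl fun k _ => sum_swap hp hq (F k)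

/-- `ℓ₊` of the word `f 0, …, f (n-1)`, as an integer double sum. -/
def plusSum (n : ℕ) (f : ℕ → ℤ) : ℤ :=
  ∑ k ∈ Finset.range n, ∑ l ∈ Finset.range n, if k < l then gtInd (f k) (f l) else 0

/-- `ℓ₋` of the word `f 0, …, f (n-1)`, as an integer double sum. -/
def minusSum (n : ℕ) (f : ℕ → ℤ) : ℤ :=
  ∑ k ∈ Finset.range n, ∑ l ∈ Finset.range n, if k ≤ l then gtInd (f k) (-(f l)) else 0

theorem lplus_eq (w : List ℤ) : (lplus w : ℤ) = plusSum w.length (fun k => w.getD k 0) := by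
  simp only [lplus, plusSum, gtInd, Finset.card_filter, Finset.sum_product, ite_and]
  push_cast
  rfl

theorem lminus_eq (w : List ℤ) : (lminus w : ℤ) = minusSum w.length (fun k => w.getD k 0) := by
  simp only [lminus, minusSum, gtInd, Finset.card_filter, Finset.sum_product, ite_and]
  push_cast
  rfl

/-- Since the counted relation is symmetric, doubling turns the sum over `k ≤ l` into the sum
over all pairs plus the diagonal, which visibly depends on the multiset of letters only. -/
theorem two_mul_minusSum (n : ℕ) (f : ℕ → ℤ) :
    2 * minusSum n f = (∑ k ∈ Finset.range n, ∑ l ∈ Finset.range n, gtInd (f k) (-(f l))) +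
      ∑ k ∈ Finset.range n, gtInd (f k) (-(f k)) := by
  have hdiag : ∑ k ∈ Finset.range n, gtInd (f k) (-(f k)) =
      ∑ k ∈ Finset.range n, ∑ l ∈ Finset.range n, if k = l then gtInd (f k) (-(f l)) else 0 := by
    refine Finset.sum_congr rfl fun k hk => ?_
    rw [Finset.sum_ite_eq, if_pos hk]
  have hflip : minusSum n f = ∑ k ∈ Finset.range n, ∑ l ∈ Finset.range n,
      if l ≤ k then gtInd (f k) (-(f l)) else 0 := by
    rw [minusSum, Finset.sum_comm]
    refine Finset.sum_congr rfl fun k _ => Finset.sum_congr rfl fun l _ => ?_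
    simp only [gtInd, slt_neg_comm (f k) (f l)]
  rw [two_mul]
  nth_rewrite 2 [hflip]
  rw [hdiag, minusSum, ← Finset.sum_add_distrib, ← Finset.sum_add_distrib]
  refine Finset.sum_congr rfl fun k _ => ?_
  rw [← Finset.sum_add_distrib, ← Finset.sum_add_distrib]
  refine Finset.sum_congr rfl fun l _ => ?_
  split_ifs <;> omega

theorem minusSum_swap {n p q : ℕ} (hp : p < n) (hq : q < n) (f : ℕ → ℤ) :
    minusSum n (fun k => f (Equiv.swap p q k)) = minusSum n f := by
  have h1 := two_mul_minusSum n (fun k => f (Equiv.swap p q k))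
  have h2 := two_mul_minusSum n f
  rw [sum_sum_swap hp hq (fun k l => gtInd (f k) (-(f l))),
    sum_swap hp hq (fun k => gtInd (f k) (-(f k)))] at h1
  omega

/-! ### The change of `ℓ₊` under a transposition -/

/-- Contribution of the letter `c`, standing between `a` and `b`, to the change of `ℓ₊` when
`a` and `b` are exchanged. -/
def contrib (a b c : ℤ) : ℤ := gtInd c a - gtInd a c + gtInd b c - gtInd c b

/-- Moving the transposition `σ` from the letters to the positions, the change of `ℓ₊` is the sum
of `([σ k < σ l] - [k < l]) [f k ≻ f l]`, whose coefficient vanishes unless one of `k, l` is `p`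
or `q` and the other lies in the interval `[p, q]`. -/
theorem plusSum_swap {n p q : ℕ} (hpq : p < q) (hq : q < n) (f : ℕ → ℤ) :
    plusSum n (fun k => f (Equiv.swap p q k)) - plusSum n f =
      gtInd (f q) (f p) - gtInd (f p) (f q) +
        ∑ m ∈ Finset.Ioo p q, contrib (f p) (f q) (f m) := by
  have hp : p < n := hpq.trans hq
  have hre : plusSum n (fun k => f (Equiv.swap p q k)) =
      ∑ k ∈ Finset.range n, ∑ l ∈ Finset.range n,
        if Equiv.swap p q k < Equiv.swap p q l then gtInd (f k) (f l) else 0 := by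
    rw [← sum_sum_swap hp hq]
    simp [plusSum]
  have hIoo : Finset.Ioo p q = (Finset.range n).filter (fun m => p < m ∧ m < q) := by
    ext m; simp; omega
  have hpoint : ∀ k l : ℕ,
      ((if Equiv.swap p q k < Equiv.swap p q l then gtInd (f k) (f l) else 0) -
        (if k < l then gtInd (f k) (f l) else 0)) =
      (if k = q then if l = p then gtInd (f q) (f p) else 0 else 0) -
      (if k = p then if l = q then gtInd (f p) (f q) else 0 else 0) +
      (if l = p then if p < k ∧ k < q then gtInd (f k) (f p) else 0 else 0) -
      (if k = p then if p < l ∧ l < q then gtInd (f p) (f l) else 0 else 0) +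
      (if k = q then if p < l ∧ l < q then gtInd (f q) (f l) else 0 else 0) -
      (if l = q then if p < k ∧ k < q then gtInd (f k) (f q) else 0 else 0) := by
    intro k l
    simp only [Equiv.swap_apply_def]
    rcases eq_or_ne k p with rfl | hkp
    · rcases eq_or_ne l k with rfl | hlp
      · simp [hpq.ne]
      · rcases eq_or_ne l q with rfl | hlq
        · simp [hpq, hpq.ne, hpq.ne', hpq.not_gt]
        · simp only [hlp, hlq, hpq.ne, if_true, if_false]
          split_ifs <;> omega
    · rcases eq_or_ne k q with rfl | hkq
      · rcases eq_or_ne l p with rfl | hlp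
        · simp [hpq, hpq.ne, hpq.ne', hpq.not_gt]
        · rcases eq_or_ne l k with rfl | hlq
          · simp [hlp]
          · simp only [hlp, hlq, hkp, if_true, if_false]
            split_ifs <;> omega
      · rcases eq_or_ne l p with rfl | hlp
        · simp only [hkp, hkq, hpq.ne, if_true, if_false]
          split_ifs <;> omega
        · rcases eq_or_ne l q with rfl | hlq
          · simp only [hkp, hkq, hlp, if_true, if_false]
            split_ifs <;> omega
          · simp [hkp, hkq, hlp, hlq]
  have hrow : ∀ (r : ℕ) (_ : r < n) (F : ℕ → ℤ),
      ∑ k ∈ Finset.range n, ∑ l ∈ Finset.range n, (if k = r then F l else 0) =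
        ∑ m ∈ Finset.range n, F m := by
    intro r hr F
    rw [Finset.sum_comm]
    refine Finset.sum_congr rfl fun l _ => ?_
    rw [Finset.sum_ite_eq', if_pos (Finset.mem_range.2 hr)]
  have hcol : ∀ (r : ℕ) (_ : r < n) (F : ℕ → ℤ),
      ∑ k ∈ Finset.range n, ∑ l ∈ Finset.range n, (if l = r then F k else 0) =
        ∑ m ∈ Finset.range n, F m := by
    intro r hr F
    refine Finset.sum_congr rfl fun l _ => ?_
    rw [Finset.sum_ite_eq', if_pos (Finset.mem_range.2 hr)]
  rw [hre, plusSum, ← Finset.sum_sub_distrib]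
  simp_rw [← Finset.sum_sub_distrib, hpoint]
  simp only [Finset.sum_add_distrib, Finset.sum_sub_distrib]
  rw [hrow q hq, hrow p hp, hcol p hp, hrow p hp, hrow q hq, hcol q hq]
  simp only [Finset.sum_ite_eq', Finset.mem_range, hp, hq, if_true, hIoo, contrib,
    Finset.sum_add_distrib, Finset.sum_sub_distrib, Finset.sum_filter]
  ring

theorem contrib_of_slt {a b c : ℤ} (hab : slt a b) (ha : a ≠ 0) (hb : b ≠ 0) (hc : c ≠ 0)
    (hca : c ≠ a) (hcb : c ≠ b) :
    contrib a b c = 2 * if slt a c ∧ slt c b then 1 else 0 := by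
  rcases slt_total hc ha hca with h | h
  · have h' := slt_trans h hab
    simp [contrib, gtInd, h, h', slt_asymm h, slt_asymm h']
  · rcases slt_total hc hb hcb with h' | h' <;>
      simp [contrib, gtInd, h, h', slt_asymm h, slt_asymm h']

theorem contrib_nonpos {a b c : ℤ} (hba : slt b a) (ha : a ≠ 0) (hb : b ≠ 0) (hc : c ≠ 0)
    (hca : c ≠ a) (hcb : c ≠ b) : contrib a b c ≤ 0 := by
  rcases slt_total hc ha hca with h | h
  · rcases slt_total hc hb hcb with h' | h' <;>
      simp [contrib, gtInd, h, h', slt_asymm h, slt_asymm h']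
  · have h' := slt_trans hba h
    simp [contrib, gtInd, h, h', slt_asymm h, slt_asymm h']

/-! ### Windows -/

theorem Nab_word_eq (w : List ℤ) {i j : ℕ} (h1 : 1 ≤ i) (h2 : i < j) (h3 : j ≤ w.length) :
    Nab (w.getD (i - 1) 0) (w.getD (j - 1) 0) (word w i j) =
      ((Finset.Ioo (i - 1) (j - 1)).filter (fun m => slt (w.getD (i - 1) 0) (w.getD m 0) ∧
        slt (w.getD m 0) (w.getD (j - 1) 0))).card := by
  have hword : word w i j = (List.range' (i - 1) (j - (i - 1))).map (fun k => w.getD k 0) := by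
    apply List.ext_getElem
    · simp [word]; omega
    · intro m hm1 hm2
      simp only [List.length_map, List.length_range'] at hm2
      simp only [word, List.getElem_take, List.getElem_drop, List.getElem_map,
        List.getElem_range', one_mul]
      rw [List.getD_eq_getElem _ _ (by omega)]
  -- The end letters `a` and `b` of the word are not counted, so `[i,j]` may be replaced by `(i,j)`.
  have hends : (Finset.Ioo (i - 1) (j - 1)).filter (fun m => slt (w.getD (i - 1) 0) (w.getD m 0) ∧
        slt (w.getD m 0) (w.getD (j - 1) 0)) =
      (Finset.Ico (i - 1) j).filter (fun m => slt (w.getD (i - 1) 0) (w.getD m 0) ∧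
        slt (w.getD m 0) (w.getD (j - 1) 0)) := by
    ext m
    simp only [Finset.mem_filter, Finset.mem_Ioo, Finset.mem_Ico]
    constructor
    · rintro ⟨hm, h⟩
      exact ⟨by omega, h⟩
    · rintro ⟨hm, h⟩
      refine ⟨⟨?_, ?_⟩, h⟩
      · refine lt_of_le_of_ne hm.1 ?_
        rintro rfl
        exact slt_irrefl _ h.1
      · refine lt_of_le_of_ne (by omega) ?_
        rintro rfl
        exact slt_irrefl _ h.2
  rw [hends, hword, Nab, List.filter_map, List.length_map]
  rfl

theorem length_of_mem_allWindows {n : ℕ} {w : List ℤ} (hw : w ∈ allWindows n) :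
    w.length = n := by
  simp only [allWindows, Finset.mem_image] at hw
  obtain ⟨σ, -, rfl⟩ := hw
  simp

theorem getD_ne_zero {n : ℕ} {w : List ℤ} (hw : w ∈ allWindows n) {k : ℕ} (hk : k < n) :
    w.getD k 0 ≠ 0 := by
  simp only [allWindows, Finset.mem_image] at hw
  obtain ⟨σ, -, rfl⟩ := hw
  rw [List.getD_eq_getElem _ _ (by simpa using hk)]
  simp only [List.getElem_map, List.getElem_finRange]
  split_ifs <;> omega

theorem getD_ne_getD {n : ℕ} {w : List ℤ} (hw : w ∈ allWindows n) {k l : ℕ} (hk : k < n)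
    (hl : l < n) (hkl : k ≠ l) : w.getD k 0 ≠ w.getD l 0 := by
  simp only [allWindows, Finset.mem_image] at hw
  obtain ⟨σ, -, rfl⟩ := hw
  rw [List.getD_eq_getElem _ _ (by simpa using hk), List.getD_eq_getElem _ _ (by simpa using hl)]
  simp only [List.getElem_map, List.getElem_finRange]
  intro h
  have hval : (σ.1 ⟨k, hk⟩ : ℕ) = (σ.1 ⟨l, hl⟩ : ℕ) := by
    simp only [Fin.cast_mk] at h
    split_ifs at h <;> omega
  have := σ.1.injective (Fin.ext hval)
  simp at this
  exact hkl this

theorem length_applyRefl (w : List ℤ) (t : ℕ × ℤ) : (applyRefl w t).length = w.length := by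
  unfold applyRefl
  split_ifs <;> simp

theorem getD_applyRefl (w : List ℤ) {i j : ℕ} (h1 : 1 ≤ i) (h2 : i < j) (h3 : j ≤ w.length) :
    (fun k => (applyRefl w (i, (j : ℤ))).getD k 0) =
      fun k => w.getD (Equiv.swap (i - 1) (j - 1) k) 0 := by
  funext k
  have hj : (0 : ℤ) < (j : ℤ) := by omega
  simp only [applyRefl, hj, if_true, Int.toNat_natCast, Equiv.swap_apply_def]
  simp only [List.getD_eq_getElem?_getD, List.getElem?_set, List.length_set]
  have hi' : i - 1 < w.length := by omega
  have hj' : j - 1 < w.length := by omega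
  by_cases hk : j - 1 = k
  · subst hk
    have : j - 1 ≠ i - 1 := by omega
    simp [hj', this]
  · by_cases hk' : i - 1 = k
    · subst hk'
      simp [hi', hk]
    · simp [hk, hk', Ne.symm hk, Ne.symm hk']

/-- for `w ∈ B_n`, `i < j`, `a = w(i)`, `b = w(j)`, if
`ℓ(w(i,j)) > ℓ(w)` then `ℓ(w(i,j)) - ℓ(w) - 1 = 2 N_{ab}(w[i,j])`. -/
theorem length_transposition (n : ℕ) (w : List ℤ) (hw : w ∈ allWindows n)
    (i j : ℕ) (h1 : 1 ≤ i) (h2 : i < j) (h3 : j ≤ n)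
    (hlen : len w < len (applyRefl w (i, (j : ℤ)))) :
    (len (applyRefl w (i, (j : ℤ))) : ℤ) - (len w : ℤ) - 1 =
      2 * (Nab (w.getD (i - 1) 0) (w.getD (j - 1) 0) (word w i j) : ℤ) := by
  have hn := length_of_mem_allWindows hw
  have hpq : i - 1 < j - 1 := by omega
  have hq : j - 1 < n := by omega
  have hp : i - 1 < n := by omega
  rw [Nab_word_eq w h1 h2 (by omega)]
  have hdiff : (len (applyRefl w (i, (j : ℤ))) : ℤ) - (len w : ℤ) =
      gtInd (w.getD (j - 1) 0) (w.getD (i - 1) 0) - gtInd (w.getD (i - 1) 0) (w.getD (j - 1) 0) +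
        ∑ m ∈ Finset.Ioo (i - 1) (j - 1),
          contrib (w.getD (i - 1) 0) (w.getD (j - 1) 0) (w.getD m 0) := by
    have hplus := plusSum_swap hpq hq (fun k => w.getD k 0)
    have hminus := minusSum_swap hp hq (fun k => w.getD k 0)
    simp only [len, Nat.cast_add, lplus_eq, lminus_eq, length_applyRefl, hn,
      getD_applyRefl w h1 h2 (by omega)]
    linarith
  have hlen' : (len w : ℤ) < len (applyRefl w (i, (j : ℤ))) := by exact_mod_cast hlen
  rcases slt_total (getD_ne_zero hw hp) (getD_ne_zero hw hq)
    (getD_ne_getD hw hp hq hpq.ne) with hab | hba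
  · rw [hdiff, gtInd, gtInd, if_pos hab, if_neg (slt_asymm hab), Finset.card_filter]
    push_cast
    rw [Finset.mul_sum, add_sub_cancel_left]
    refine Finset.sum_congr rfl fun m hm => ?_
    rw [Finset.mem_Ioo] at hm
    exact contrib_of_slt hab (getD_ne_zero hw hp) (getD_ne_zero hw hq)
      (getD_ne_zero hw (by omega)) (getD_ne_getD hw (by omega) hp (by omega))
      (getD_ne_getD hw (by omega) hq (by omega))
  · -- If `b ≺ a`, every term of the difference is nonpositive, so the length would drop.
    exfalso
    have hsum : ∑ m ∈ Finset.Ioo (i - 1) (j - 1),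
        contrib (w.getD (i - 1) 0) (w.getD (j - 1) 0) (w.getD m 0) ≤ 0 := by
      refine Finset.sum_nonpos fun m hm => ?_
      rw [Finset.mem_Ioo] at hm
      exact contrib_nonpos hba (getD_ne_zero hw hp) (getD_ne_zero hw hq)
        (getD_ne_zero hw (by omega)) (getD_ne_getD hw (by omega) hp (by omega))
        (getD_ne_getD hw (by omega) hq (by omega))
    rw [gtInd, gtInd, if_pos hba, if_neg (slt_asymm hba)] at hdiff
    omega

end HL
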